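/- arXiv:2410.04413 — 2 statements merged into one kernel-verified Lean document; each statement's English description precedes it below -/
import Mathlib

section
/- Let G be a connected d-regular graph of even order, where d ≥ 3, and let λ₂(G) be the second largest eigenvalue of its adjacency matrix. Then G contains ⌊(2/3)(d − λ₂(G))⌋ pairwise edge-disjoint perfect matchings. -/
open Classical in
/-- The adjacency matrix of a finite simple graph (over `ℝ`) is Hermitian. -/
lemma adjMatrix_isHermitian {V : Type*} [Fintype V] (G : SimpleGraph V) [DecidableRel G.Adj] :
    (G.adjMatrix ℝ).IsHermitian := by
  ext i j
  simp [Matrix.conjTranspose_apply, SimpleGraph.adj_comm]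

open Classical in
/-- The multiset of adjacency eigenvalues (with multiplicity) of a finite simple graph. -/
noncomputable def adjEigenvalues {V : Type*} [Fintype V] (G : SimpleGraph V) : Multiset ℝ :=
  Finset.univ.val.map (adjMatrix_isHermitian G).eigenvalues

open Classical in
/-- `lambda2 G` is the second largest adjacency eigenvalue (with multiplicity) of `G`:
the second entry of the list of all eigenvalues sorted in decreasing order, i.e. the entry at
position `|V| - 2` (0-indexed) of the increasingly sorted list. -/
noncomputable def lambda2 {V : Type*} [Fintype V] (G : SimpleGraph V) : ℝ :=
  ((adjEigenvalues G).sort (· ≤ ·)).getD (Fintype.card V - 2) 0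

/-!
Put `m = ⌊(2 / 3) (d - λ₂)⌋`. By the spectral gap every set `P` of vertices is left by at least
`(d - λ₂) |P| |Pᶜ| / |V| ≥ (3m / 2) |P| |Pᶜ| / |V|` edges. This expansion allows one to enlarge a
union `F` of `k < m` disjoint perfect matchings, as long as `k + 1 < d`.

If `G \ F` has no perfect matching, then Tutte's theorem provides a set `S` whose deletion from
`G \ F` leaves at least `|S| + 2` components. Those with at most `|V| / 3` vertices send at least
`d - k` edges to `S`, which receives at most `(d - k) |S|`. Hence exactly two components are larger,
they send no edges to `S`, and by expansion they cover `V`. So `G \ F` has no edge across some set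
`A ≠ ∅, V`.

Since `G` has at least `k + 1` edges across `A`, some matching `M` in `F` has two of them. The same
argument yields a perfect matching of `G \ (F \ M)` that avoids one of these two edges, to be
exchanged for `M`. If the new union still cannot be enlarged, then the complement of its edges
misses a cut `Q`. Expansion makes every nonempty intersection of `A` or `Aᶜ` with `Q` or `Qᶜ` have
at least `|V| / 3` vertices, while `A`, `Aᶜ`, `Q` and `Qᶜ` have more than that; so `Q` is `A` or
`Aᶜ`, although the freed edge crosses `A`.
-/

open Finset SimpleGraph

section Cut

variable {V : Type*} [Fintype V] {X Y : SimpleGraph V} {P Q S : Finset V}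

open Classical in
/-- The number of edges of `X` with exactly one endpoint in `P`. The equation `cutSize X P = 0` says
that `P` is a union of connected components of `X`. -/
noncomputable def cutSize (X : SimpleGraph V) (P : Finset V) : ℕ :=
  #(X.interedges P Pᶜ)

lemma cutSize_eq_zero : cutSize X P = 0 ↔ ∀ u ∈ P, ∀ v ∉ P, ¬ X.Adj u v := by
  simp only [cutSize, card_eq_zero, eq_empty_iff_forall_notMem, mem_interedges_iff, Prod.forall,
    mem_compl, not_and]
  tauto

lemma cutSize_pos : 0 < cutSize X P ↔ ∃ u ∈ P, ∃ v ∉ P, X.Adj u v := by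
  simp [Nat.pos_iff_ne_zero, Ne, cutSize_eq_zero]

lemma cutSize_mono (hXY : X ≤ Y) (P : Finset V) : cutSize X P ≤ cutSize Y P := by
  classical
  exact card_le_card fun e ↦ by simpa [mem_interedges_iff] using fun hu hv h ↦ ⟨hu, hv, hXY h⟩

lemma cutSize_sup_le (X Y : SimpleGraph V) (P : Finset V) :
    cutSize (X ⊔ Y) P ≤ cutSize X P + cutSize Y P := by
  classical
  refine (card_le_card fun e ↦ ?_).trans (card_union_le _ _)
  simp only [mem_union, mem_interedges_iff, sup_adj]
  tauto

lemma cutSize_le_cutSize_sdiff_add (X Y : SimpleGraph V) (P : Finset V) :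
    cutSize X P ≤ cutSize (X \ Y) P + cutSize Y P :=
  (cutSize_mono le_sdiff_sup P).trans (cutSize_sup_le _ _ P)

lemma cutSize_compl [DecidableEq V] (X : SimpleGraph V) (P : Finset V) :
    cutSize X Pᶜ = cutSize X P := by
  refine card_nbij' Prod.swap Prod.swap ?_ ?_ (fun _ _ ↦ rfl) (fun _ _ ↦ rfl) <;>
  · simp only [Set.MapsTo, mem_coe, mem_interedges_iff, Prod.forall, mem_compl, Prod.fst_swap,
      Prod.snd_swap, not_not, X.adj_comm]
    tauto

lemma cutSize_inter_le [DecidableEq V] (X : SimpleGraph V) (P Q : Finset V) :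
    cutSize X (P ∩ Q) ≤ cutSize X P + cutSize X Q := by
  refine (card_le_card fun e ↦ ?_).trans (card_union_le _ _)
  simp only [mem_union, mem_interedges_iff, mem_compl, mem_inter]
  tauto

lemma cutSize_le_card_mul_card_compl [DecidableEq V] (X : SimpleGraph V) (P : Finset V) :
    cutSize X P ≤ #P * #Pᶜ := by
  classical
  rw [cutSize]
  convert card_interedges_le_mul X P Pᶜ

lemma cutSize_eq_sum_card_sdiff [DecidableEq V] [DecidableRel X.Adj] (P : Finset V) :
    cutSize X P = ∑ u ∈ P, #(X.neighborFinset u \ P) := by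
  rw [cutSize, ← card_sigma]
  refine card_nbij' (fun e ↦ ⟨e.1, e.2⟩) (fun e ↦ (e.1, e.2)) ?_ ?_ (fun _ _ ↦ rfl)
    (fun _ _ ↦ rfl) <;>
  · simp only [Set.MapsTo, mem_coe, mem_interedges_iff, mem_compl, mem_sigma, mem_sdiff,
      mem_neighborFinset]
    tauto

lemma cutSize_le_sum_degree [DecidableRel X.Adj] (P : Finset V) :
    cutSize X P ≤ ∑ u ∈ P, X.degree u := by
  classical
  rw [cutSize_eq_sum_card_sdiff]
  exact sum_le_sum fun u _ ↦ card_le_card sdiff_subset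

lemma cutSize_le_mul_card [DecidableRel X.Adj] {m : ℕ} (hX : ∀ v, X.degree v ≤ m) (P : Finset V) :
    cutSize X P ≤ m * #P :=
  (cutSize_le_sum_degree P).trans <| (sum_le_card_nsmul P _ m fun v _ ↦ hX v).trans_eq <|
    mul_comm _ _

lemma cutSize_edge_le_one (u v : V) (P : Finset V) : cutSize (edge u v) P ≤ 1 := by
  refine card_le_one.2 fun e he f hf ↦ ?_
  simp only [mem_interedges_iff, mem_compl, edge_adj] at he hf
  grind

lemma card_mul_le_cutSize_add_sq [DecidableRel X.Adj] {m : ℕ} (hX : ∀ v, m ≤ X.degree v)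
    (P : Finset V) : #P * (m + 1) ≤ cutSize X P + #P ^ 2 := by
  classical
  have degree_le (u) (hu : u ∈ P) : m + 1 ≤ #(X.neighborFinset u \ P) + #P := by
    have hinter : X.neighborFinset u ∩ P ⊆ P.erase u := fun v hv ↦ by
      simp only [mem_inter, mem_neighborFinset] at hv
      exact mem_erase.2 ⟨hv.1.ne', hv.2⟩
    have hcard := card_lt_card (hinter.trans_ssubset (erase_ssubset hu))
    have hsplit := card_sdiff_add_card_inter (X.neighborFinset u) P
    have := hX u
    rw [card_neighborFinset_eq_degree] at hsplit
    omega
  calc #P * (m + 1) = ∑ u ∈ P, (m + 1) := by simp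
    _ ≤ ∑ u ∈ P, (#(X.neighborFinset u \ P) + #P) := sum_le_sum degree_le
    _ = cutSize X P + #P ^ 2 := by
      rw [sum_add_distrib, ← cutSize_eq_sum_card_sdiff, sum_const, smul_eq_mul, sq]

lemma le_cutSize_of_card_le [DecidableRel X.Adj] {m : ℕ} (hX : ∀ v, m ≤ X.degree v)
    (hP : P.Nonempty) (hcard : #P ≤ cutSize X P) : m ≤ cutSize X P := by
  by_contra! hlt
  obtain ⟨a, ha⟩ := Nat.exists_eq_add_of_lt hP.card_pos
  obtain ⟨b, hb⟩ := Nat.exists_eq_add_of_lt (hcard.trans_lt hlt)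
  have := card_mul_le_cutSize_add_sq hX P
  nlinarith [Nat.zero_le (a * b), hb]

lemma sum_cutSize_le_cutSize {𝓠 : Finset (Finset V)}
    (h𝓠 : (𝓠 : Set (Finset V)).PairwiseDisjoint id) (hdisj : ∀ Q ∈ 𝓠, Disjoint Q S)
    (hadj : ∀ Q ∈ 𝓠, ∀ u ∈ Q, ∀ v ∉ Q, X.Adj u v → v ∈ S) :
    ∑ Q ∈ 𝓠, cutSize X Q ≤ cutSize X S := by
  classical
  have disjoint_interedges :
      (𝓠 : Set (Finset V)).PairwiseDisjoint fun Q ↦ X.interedges Q Qᶜ := fun Q hQ R hR hQR ↦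
    disjoint_left.2 fun e he hf ↦ disjoint_left.1 (h𝓠 hQ hR hQR)
      (X.mem_interedges_iff.1 he).1 (X.mem_interedges_iff.1 hf).1
  unfold cutSize
  rw [← card_biUnion disjoint_interedges]
  refine card_le_card_of_injOn Prod.swap (fun ⟨u, v⟩ he ↦ ?_) Prod.swap_injective.injOn
  obtain ⟨Q, hQ, hu, hv, huv⟩ := by
    simpa only [coe_biUnion, mem_coe, Set.mem_iUnion, exists_prop, mem_interedges_iff,
      mem_compl] using he
  simpa [mem_interedges_iff] using
    ⟨hadj Q hQ u hu v hv huv, disjoint_left.1 (hdisj Q hQ) hu, huv.symm⟩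

lemma sum_cutSize_le_two_mul_card_edgeFinset [Fintype X.edgeSet] {𝓠 : Finset (Finset V)}
    (h𝓠 : (𝓠 : Set (Finset V)).PairwiseDisjoint id) :
    ∑ Q ∈ 𝓠, cutSize X Q ≤ 2 * #X.edgeFinset := by
  classical
  calc ∑ Q ∈ 𝓠, cutSize X Q ≤ ∑ Q ∈ 𝓠, ∑ u ∈ Q, X.degree u :=
        sum_le_sum fun Q _ ↦ cutSize_le_sum_degree Q
    _ = ∑ u ∈ 𝓠.biUnion id, X.degree u := (sum_biUnion h𝓠).symm
    _ ≤ ∑ u, X.degree u := sum_le_sum_of_subset (subset_univ _)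
    _ = 2 * #X.edgeFinset := by convert X.sum_degrees_eq_twice_card_edges

end Cut

section Expander

variable {V : Type*} [Fintype V] {G F : SimpleGraph V} {k m : ℕ} {P : Finset V}

/-- Edge expansion in the form `e(P, Pᶜ) ≥ (3m / 2) · |P| |Pᶜ| / |V|` for all `P`, with denominators
cleared. A `d`-regular graph satisfies it whenever `m ≤ (2 / 3) (d - λ₂)`. -/
def IsEdgeExpander (G : SimpleGraph V) (m : ℕ) : Prop :=
  ∀ P : Finset V, 3 * m * (#P * (Fintype.card V - #P)) ≤ 2 * Fintype.card V * cutSize G P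

namespace IsEdgeExpander

lemma mono (hG : IsEdgeExpander G m) (hkm : k ≤ m) : IsEdgeExpander G k := fun P ↦
  (Nat.mul_le_mul_right _ (Nat.mul_le_mul_left 3 hkm)).trans (hG P)

lemma mul_card_le_cutSize (hG : IsEdgeExpander G m) (hP : 3 * #P ≤ Fintype.card V) :
    m * #P ≤ cutSize G P := by
  obtain hn | hn := (Fintype.card V).eq_zero_or_pos
  · simp [show #P = 0 by omega]
  refine Nat.le_of_mul_le_mul_left ?_ (show 0 < 2 * Fintype.card V by omega)
  calc 2 * Fintype.card V * (m * #P) ≤ 3 * (Fintype.card V - #P) * (m * #P) :=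
        Nat.mul_le_mul_right _ (by omega)
    _ = 3 * m * (#P * (Fintype.card V - #P)) := by ring
    _ ≤ 2 * Fintype.card V * cutSize G P := hG P

lemma mul_card_lt_cutSize (hG : IsEdgeExpander G m) (hm : 0 < m) (hP : P.Nonempty)
    (hcard : 3 * #P < Fintype.card V) : m * #P < cutSize G P := by
  have hpos : 0 < m * #P := Nat.mul_pos hm hP.card_pos
  refine Nat.lt_of_mul_lt_mul_left (a := 2 * Fintype.card V) ?_
  calc 2 * Fintype.card V * (m * #P) < 3 * (Fintype.card V - #P) * (m * #P) :=
        Nat.mul_lt_mul_of_pos_right (by omega) hpos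
    _ = 3 * m * (#P * (Fintype.card V - #P)) := by ring
    _ ≤ 2 * Fintype.card V * cutSize G P := hG P

lemma le_cutSize (hG : IsEdgeExpander G m) (hP : P.Nonempty) (hP' : P ≠ univ) :
    m ≤ cutSize G P := by
  classical
  have hG := hG P
  have hcut := cutSize_le_card_mul_card_compl G P
  have hn := card_add_card_compl P
  rw [← hn, Nat.add_sub_cancel_left] at hG
  obtain ⟨a, ha⟩ := Nat.exists_eq_add_of_lt hP.card_pos
  obtain ⟨b, hb⟩ := Nat.exists_eq_add_of_lt
    (card_pos.2 (nonempty_iff_ne_empty.2 ((compl_eq_empty_iff _).not.2 hP')))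
  have hsum : #P + #Pᶜ ≤ #P * #Pᶜ + 1 := by
    rw [ha, hb]
    nlinarith [Nat.zero_le (a * b)]
  -- `3mab ≤ 2(a + b)c ≤ 2(ab + 1)c ≤ 2(c + 1)ab`, so `3m ≤ 2c + 2`
  have hbound : 3 * m ≤ 2 * cutSize G P + 2 := by
    refine Nat.le_of_mul_le_mul_right ?_ (show 0 < #P * #Pᶜ by rw [ha, hb]; positivity)
    nlinarith [Nat.mul_le_mul_right (cutSize G P) hsum]
  omega

lemma le_degree [Nontrivial V] [DecidableRel G.Adj] (hG : IsEdgeExpander G m) (v : V) :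
    m ≤ G.degree v := by
  simpa using (hG.le_cutSize (singleton_nonempty v) (singleton_ne_univ v)).trans
    (cutSize_le_sum_degree {v})

lemma card_le_cutSize_sdiff [DecidableRel F.Adj] (hG : IsEdgeExpander G (k + 1))
    (hF : ∀ v, F.degree v ≤ k) (hP : 3 * #P ≤ Fintype.card V) : #P ≤ cutSize (G \ F) P := by
  have := hG.mul_card_le_cutSize hP
  have := cutSize_le_cutSize_sdiff_add G F P
  have := cutSize_le_mul_card hF P
  linarith

lemma card_lt_of_cutSize_sdiff_eq_zero [DecidableRel F.Adj] (hG : IsEdgeExpander G (k + 1))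
    (hF : ∀ v, F.degree v ≤ k) (hP : P.Nonempty) (hcut : cutSize (G \ F) P = 0) :
    Fintype.card V < 3 * #P := by
  by_contra! hle
  exact (hG.card_le_cutSize_sdiff hF hle).not_gt (hcut ▸ hP.card_pos)

lemma card_le_of_cutSize_sdiff_eq_zero [DecidableRel F.Adj] (hG : IsEdgeExpander G m) (hm : 0 < m)
    (hF : ∀ v, F.degree v ≤ m) (hP : P.Nonempty) (hcut : cutSize (G \ F) P = 0) :
    Fintype.card V ≤ 3 * #P := by
  by_contra! hlt
  have := hG.mul_card_lt_cutSize hm hP hlt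
  have := cutSize_le_cutSize_sdiff_add G F P
  have := cutSize_le_mul_card hF P
  omega

end IsEdgeExpander

end Expander

section Factor

variable {V : Type*} {G X F M : SimpleGraph V} {k : ℕ}

/-- The edges of `M` form a perfect matching of the vertex set. -/
def IsOneFactor (M : SimpleGraph V) : Prop :=
  ∀ v, ∃! w, M.Adj v w

lemma exists_isOneFactor_iff :
    (∃ M ≤ X, IsOneFactor M) ↔ ∃ M : X.Subgraph, M.IsPerfectMatching := by
  constructor
  · rintro ⟨M, hMX, hM⟩
    exact ⟨toSubgraph M hMX, Subgraph.isPerfectMatching_iff.2 hM⟩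
  · rintro ⟨M, hM⟩
    exact ⟨M.spanningCoe, M.spanningCoe_le, Subgraph.isPerfectMatching_iff.1 hM⟩

/-- `F` is the union of `k` pairwise edge-disjoint perfect matchings. -/
inductive IsOneFactorable : ℕ → SimpleGraph V → Prop
  | bot : IsOneFactorable 0 ⊥
  | sup {k : ℕ} {F M : SimpleGraph V} (hF : IsOneFactorable k F) (hM : IsOneFactor M)
    (hFM : Disjoint F M) : IsOneFactorable (k + 1) (F ⊔ M)

lemma degree_sup_of_disjoint {v : V} [Fintype (F.neighborSet v)] [Fintype (M.neighborSet v)]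
    [Fintype ((F ⊔ M).neighborSet v)] (hFM : Disjoint F M) :
    (F ⊔ M).degree v = F.degree v + M.degree v := by
  simp only [← card_neighborFinset_eq_degree]
  rw [neighborFinset_sup_of_disjoint v hFM, card_disjUnion]

lemma degree_sup_le {v : V} [Fintype (F.neighborSet v)] [Fintype (M.neighborSet v)]
    [Fintype ((F ⊔ M).neighborSet v)] : (F ⊔ M).degree v ≤ F.degree v + M.degree v := by
  classical
  simp only [← card_neighborFinset_eq_degree]
  refine (card_le_card fun w hw ↦ ?_).trans (card_union_le _ _)
  simpa using hw

lemma degree_sdiff_add_degree [Fintype V] [DecidableRel G.Adj] [DecidableRel F.Adj]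
    [DecidableRel (G \ F).Adj] (hFG : F ≤ G) (v : V) :
    (G \ F).degree v + F.degree v = G.degree v := by
  classical
  rw [← degree_sup_of_disjoint disjoint_sdiff_self_left]
  congr! 1
  exact sdiff_sup_cancel hFG

lemma IsOneFactor.degree_eq_one {v : V} [Fintype (M.neighborSet v)] (hM : IsOneFactor M) :
    M.degree v = 1 :=
  degree_eq_one_iff_existsUnique_adj.2 (hM v)

namespace IsOneFactorable

lemma degree_eq [Fintype V] [DecidableRel F.Adj] (hF : IsOneFactorable k F) (v : V) :
    F.degree v = k := by
  classical
  revert ‹DecidableRel F.Adj›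
  induction hF with
  | bot => simp
  | sup _ hM hFM ih => intro; rw [degree_sup_of_disjoint hFM, ih, hM.degree_eq_one]

lemma exists_two_le_cutSize [Fintype V] {P : Finset V} (hF : IsOneFactorable k F)
    (hP : k < cutSize F P) : ∃ j F₀ M, k = j + 1 ∧ F = F₀ ⊔ M ∧ Disjoint F₀ M ∧
      IsOneFactorable j F₀ ∧ IsOneFactor M ∧ 2 ≤ cutSize M P := by
  induction hF with
  | bot => simp [cutSize_eq_zero.2] at hP
  | @sup k F M hF hM hFM ih =>
    by_cases hMP : 2 ≤ cutSize M P
    · exact ⟨k, F, M, rfl, rfl, hFM, hF, hM, hMP⟩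
    have := cutSize_sup_le F M P
    obtain ⟨j, F₀, N, rfl, rfl, hFN, hF₀, hN, hNP⟩ := ih (by omega)
    rw [disjoint_sup_left] at hFM
    exact ⟨j + 1, F₀ ⊔ M, N, rfl, by rw [sup_right_comm], hFN.sup_left hFM.2.symm,
      hF₀.sup hM hFM.1, hN, hNP⟩

lemma exists_pairwise_disjoint (hF : IsOneFactorable k F) :
    ∃ M : Fin k → SimpleGraph V, (∀ i, M i ≤ F ∧ IsOneFactor (M i)) ∧
      Pairwise fun i j ↦ Disjoint (M i) (M j) := by
  induction hF with
  | bot => exact ⟨Fin.elim0, fun i ↦ i.elim0, fun i ↦ i.elim0⟩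
  | @sup k F N _ hN hFN ih =>
    obtain ⟨M, hM, hdisj⟩ := ih
    have disjoint_new (i) : Disjoint N (M i) := (hFN.mono_left (hM i).1).symm
    refine ⟨Fin.cons N M, Fin.cases ⟨le_sup_right, hN⟩ fun i ↦ ⟨(hM i).1.trans le_sup_left,
      (hM i).2⟩, fun i j hij ↦ ?_⟩
    cases i using Fin.cases with
    | zero => cases j using Fin.cases with
      | zero => exact absurd rfl hij
      | succ j => exact disjoint_new j
    | succ i => cases j using Fin.cases with
      | zero => exact (disjoint_new i).symm
      | succ j => exact hdisj fun h ↦ hij (congrArg Fin.succ h)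

lemma exists_isPerfectMatching (hF : IsOneFactorable k F) (hFG : F ≤ G) :
    ∃ M : Fin k → G.Subgraph, (∀ i, (M i).IsPerfectMatching) ∧
      ∀ i j, i ≠ j → Disjoint (M i).edgeSet (M j).edgeSet := by
  obtain ⟨M, hM, hdisj⟩ := hF.exists_pairwise_disjoint
  refine ⟨fun i ↦ toSubgraph (M i) ((hM i).1.trans hFG),
    fun i ↦ Subgraph.isPerfectMatching_iff.2 (hM i).2, fun i j hij ↦ ?_⟩
  exact disjoint_edgeSet.2 (hdisj hij)

end IsOneFactorable

end Factor

section Tutte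

variable {V : Type*} {X Y E : SimpleGraph V}

lemma ncard_add_two_le_ncard_oddComponents [Finite V] (heven : Even (Nat.card V)) {U : Set V}
    (hU : X.IsTutteViolator U) :
    U.ncard + 2 ≤ ((⊤ : X.Subgraph).deleteVerts U).coe.oddComponents.ncard := by
  have hparity := odd_ncard_oddComponents ((⊤ : X.Subgraph).deleteVerts U).coe
  have hcard : ((⊤ : X.Subgraph).deleteVerts U).verts.ncard + U.ncard = Nat.card V := by
    simpa [Set.compl_eq_univ_sdiff, add_comm] using Set.ncard_add_ncard_compl U
  rw [Nat.card_coe_set_eq] at hparity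
  rw [← hcard, Nat.even_iff] at heven
  rw [IsTutteViolator] at hU
  grind

lemma exists_pairwiseDisjoint_of_isTutteViolator [Finite V] (heven : Even (Nat.card V)) {U : Set V}
    (hU : X.IsTutteViolator U) :
    ∃ (S : Finset V) (𝓠 : Finset (Finset V)), #S + 2 ≤ #𝓠 ∧
      (𝓠 : Set (Finset V)).PairwiseDisjoint id ∧ ∀ Q ∈ 𝓠, Q.Nonempty ∧ Disjoint Q S ∧
        ∀ u ∈ Q, ∀ v ∉ Q, X.Adj u v → v ∈ S := by
  classical
  cases nonempty_fintype V
  set D := ((⊤ : X.Subgraph).deleteVerts U).coe with hD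
  have hcard : U.ncard + 2 ≤ D.oddComponents.ncard :=
    ncard_add_two_le_ncard_oddComponents heven hU
  let part (c : D.ConnectedComponent) : Finset V := (Subtype.val '' c.supp).toFinset
  have mem_part {c v} : v ∈ part c ↔ ∃ h, D.connectedComponentMk ⟨v, h⟩ = c := by
    simp [part]
  have part_injective : Function.Injective part := fun c c' h ↦
    ConnectedComponent.supp_injective <| Subtype.val_injective.image_injective <|
      Set.toFinset_inj.1 h
  refine ⟨U.toFinset, D.oddComponents.toFinset.image part, ?_, ?_, ?_⟩
  · rwa [card_image_of_injective _ part_injective, ← Set.ncard_eq_toFinset_card',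
      ← Set.ncard_eq_toFinset_card']
  · simp only [coe_image, Set.coe_toFinset]
    rintro _ ⟨c, -, rfl⟩ _ ⟨c', -, rfl⟩ hne
    have hcc' := pairwise_disjoint_supp_connectedComponent D (fun h ↦ hne (congrArg part h))
    simpa [part, Function.onFun, Set.disjoint_image_iff Subtype.val_injective] using hcc'
  · simp only [mem_image]
    rintro _ ⟨c, -, rfl⟩
    refine ⟨?_, ?_, fun u hu v hv huv ↦ ?_⟩
    · simpa [part] using c.nonempty_supp
    · rw [Finset.disjoint_left]
      intro v hv
      obtain ⟨h, -⟩ := mem_part.1 hv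
      simpa using h.2
    · obtain ⟨⟨_, huU⟩, rfl⟩ := mem_part.1 hu
      by_contra hvU
      rw [Set.mem_toFinset] at hvU
      exact hv (mem_part.2 ⟨⟨trivial, hvU⟩, ConnectedComponent.sound <| Adj.reachable <| by
        simp [hD, huU, hvU, huv.symm]⟩)

lemma card_lt_of_pairwiseDisjoint [Fintype V] {𝓠 : Finset (Finset V)} {r : ℕ} (hr : 0 < r)
    (h𝓠 : (𝓠 : Set (Finset V)).PairwiseDisjoint id)
    (hcard : ∀ Q ∈ 𝓠, Fintype.card V < r * #Q) : #𝓠 < r := by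
  classical
  have hunion : ∑ Q ∈ 𝓠, #Q ≤ Fintype.card V := by
    simpa [card_biUnion h𝓠] using card_le_univ (𝓠.biUnion id)
  have hlarge : #𝓠 * (Fintype.card V + 1) ≤ r * ∑ Q ∈ 𝓠, #Q := by
    rw [mul_sum, ← smul_eq_mul]
    exact card_nsmul_le_sum _ _ _ hcard
  by_contra! hle
  nlinarith

-- Members with `3 * #Q ≤ |V|` have weight at least `ρ`, so at least two members are larger; there
-- cannot be three of them.
lemma exists_pair_card_lt [Fintype V] {𝓠 : Finset (Finset V)} {f : Finset V → ℕ} {ρ s b : ℕ}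
    (h𝓠 : (𝓠 : Set (Finset V)).PairwiseDisjoint id) (hs : s + 2 ≤ #𝓠) (hb : b < ρ)
    (hsmall : ∀ Q ∈ 𝓠, 3 * #Q ≤ Fintype.card V → ρ ≤ f Q) (hsum : ∑ Q ∈ 𝓠, f Q ≤ ρ * s + b) :
    ∃ Q₁ ∈ 𝓠, ∃ Q₂ ∈ 𝓠, Q₁ ≠ Q₂ ∧ Fintype.card V < 3 * #Q₁ ∧ Fintype.card V < 3 * #Q₂ ∧
      f Q₁ + f Q₂ ≤ b := by
  classical
  let L := {Q ∈ 𝓠 | Fintype.card V < 3 * #Q}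
  have hL_lt : #L < 3 := card_lt_of_pairwiseDisjoint (by norm_num)
    (h𝓠.subset (coe_subset.2 (filter_subset _ _))) fun Q hQ ↦ (mem_filter.1 hQ).2
  have hsplit : ∑ Q ∈ L, f Q + #{Q ∈ 𝓠 | ¬ Fintype.card V < 3 * #Q} * ρ ≤ ∑ Q ∈ 𝓠, f Q := by
    rw [← sum_filter_add_sum_filter_not 𝓠 (fun Q ↦ Fintype.card V < 3 * #Q) f, ← smul_eq_mul]
    gcongr
    refine card_nsmul_le_sum _ _ _ fun Q hQ ↦ ?_
    simp only [mem_filter, not_lt] at hQ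
    exact hsmall Q hQ.1 hQ.2
  have hcard : #L + #{Q ∈ 𝓠 | ¬ Fintype.card V < 3 * #Q} = #𝓠 := card_filter_add_card_filter_not _
  have hL : #L = 2 := by
    by_contra hne
    linarith [Nat.zero_le (∑ Q ∈ L, f Q), Nat.mul_le_mul_right ρ
      (show s + 1 ≤ #{Q ∈ 𝓠 | ¬ Fintype.card V < 3 * #Q} by omega)]
  obtain ⟨Q₁, Q₂, hne, hL_eq⟩ := card_eq_two.1 hL
  obtain ⟨hQ₁, hQ₁'⟩ := mem_filter.1 (show Q₁ ∈ L by simp [hL_eq])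
  obtain ⟨hQ₂, hQ₂'⟩ := mem_filter.1 (show Q₂ ∈ L by simp [hL_eq])
  refine ⟨Q₁, hQ₁, Q₂, hQ₂, hne, hQ₁', hQ₂', ?_⟩
  rw [hL_eq, sum_pair hne] at hsplit
  linarith [Nat.mul_le_mul_right ρ
    (show s ≤ #{Q ∈ 𝓠 | ¬ Fintype.card V < 3 * #Q} by omega)]

lemma exists_isOneFactor_or_cutSize_eq_zero_of_le_sup [Fintype V] [DecidableRel X.Adj]
    [Fintype E.edgeSet] {ρ : ℕ} (heven : Even (Fintype.card V)) (hYX : Y ≤ X ⊔ E)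
    (hX : ∀ v, X.degree v ≤ ρ) (hE : 2 * #E.edgeFinset < ρ)
    (hY : ∀ P : Finset V, P.Nonempty → 3 * #P ≤ Fintype.card V → ρ ≤ cutSize Y P) :
    (∃ M ≤ X, IsOneFactor M) ∨ ∃ Q : Finset V, Q.Nonempty ∧ Q ≠ univ ∧ cutSize X Q = 0 := by
  classical
  by_cases hM : ∃ M : X.Subgraph, M.IsPerfectMatching
  · exact .inl (exists_isOneFactor_iff.2 hM)
  right
  rw [← Nat.card_eq_fintype_card] at heven
  obtain ⟨U, hU⟩ := exists_isTutteViolator (not_exists.1 hM) heven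
  obtain ⟨S, 𝓠, hcard, h𝓠, hQ⟩ := exists_pairwiseDisjoint_of_isTutteViolator heven hU
  have hsum : ∑ Q ∈ 𝓠, cutSize Y Q ≤ ρ * #S + 2 * #E.edgeFinset := calc
    _ ≤ ∑ Q ∈ 𝓠, cutSize X Q + ∑ Q ∈ 𝓠, cutSize E Q := by
      rw [← sum_add_distrib]
      exact sum_le_sum fun Q _ ↦ (cutSize_mono hYX Q).trans (cutSize_sup_le X E Q)
    _ ≤ cutSize X S + 2 * #E.edgeFinset := add_le_add
      (sum_cutSize_le_cutSize h𝓠 (fun Q h ↦ (hQ Q h).2.1) fun Q h ↦ (hQ Q h).2.2)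
      (sum_cutSize_le_two_mul_card_edgeFinset h𝓠)
    _ ≤ _ := by gcongr; exact cutSize_le_mul_card hX S
  obtain ⟨Q₁, hQ₁, Q₂, hQ₂, hne, hlarge₁, hlarge₂, hcut⟩ :=
    exists_pair_card_lt h𝓠 hcard hE (fun Q h ↦ hY Q (hQ Q h).1) hsum
  have hdisj : Disjoint Q₁ Q₂ := h𝓠 hQ₁ hQ₂ hne
  have hunion : Q₁ ∪ Q₂ = univ := by
    by_contra hC
    have hCne : (Q₁ᶜ ∩ Q₂ᶜ).Nonempty := by
      rwa [← compl_union, nonempty_iff_ne_empty, Ne, compl_eq_empty_iff]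
    have hCcard : 3 * #(Q₁ᶜ ∩ Q₂ᶜ) ≤ Fintype.card V := by
      have := card_add_card_compl (Q₁ ∪ Q₂)
      rw [card_union_of_disjoint hdisj, compl_union] at this
      omega
    have := hY _ hCne hCcard
    have := cutSize_inter_le Y Q₁ᶜ Q₂ᶜ
    simp only [cutSize_compl] at this
    omega
  refine ⟨Q₁, (hQ Q₁ hQ₁).1, ?_, cutSize_eq_zero.2 fun u hu v hv huv ↦ ?_⟩
  · rintro rfl
    exact (hQ Q₂ hQ₂).1.ne_empty (top_disjoint.1 hdisj)
  · have hvQ₂ : v ∈ Q₂ := by simpa [hv] using hunion.ge (mem_univ v)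
    exact Finset.disjoint_left.1 (hQ Q₂ hQ₂).2.1 hvQ₂ ((hQ Q₁ hQ₁).2.2 u hu v hv huv)

end Tutte

section Augmentation

variable {V : Type*} [Fintype V] {G F M : SimpleGraph V} {A Q : Finset V} {d j k : ℕ}

lemma eq_or_eq_compl_of_card_inter [DecidableEq V]
    (hA : Fintype.card V < 3 * #A) (hA' : Fintype.card V < 3 * #Aᶜ)
    (hQ : Fintype.card V < 3 * #Q) (hQ' : Fintype.card V < 3 * #Qᶜ)
    (hinter : ∀ B C, (B = A ∨ B = Aᶜ) → (C = Q ∨ C = Qᶜ) → (B ∩ C).Nonempty →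
      Fintype.card V ≤ 3 * #(B ∩ C)) : Q = A ∨ Q = Aᶜ := by
  have hinter' (B C) (hB : B = A ∨ B = Aᶜ) (hC : C = Q ∨ C = Qᶜ) :
      #(B ∩ C) = 0 ∨ Fintype.card V ≤ 3 * #(B ∩ C) := by
    obtain hBC | hBC := (B ∩ C).eq_empty_or_nonempty
    · exact .inl (card_eq_zero.2 hBC)
    · exact .inr (hinter B C hB hC hBC)
  have card_inter_add (B C : Finset V) : #(B ∩ C) + #(B ∩ Cᶜ) = #B := by
    rw [← sdiff_eq_inter_compl, card_inter_add_card_sdiff]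
  have hn := card_add_card_compl A
  have hAQ := hinter' A Q (.inl rfl) (.inl rfl)
  have hAQ' := hinter' A Qᶜ (.inl rfl) (.inr rfl)
  have hA'Q := hinter' Aᶜ Q (.inr rfl) (.inl rfl)
  have hA'Q' := hinter' Aᶜ Qᶜ (.inr rfl) (.inr rfl)
  have hsumA := card_inter_add A Q
  have hsumA' := card_inter_add Aᶜ Q
  have hsumQ := card_inter_add Q A
  have hsumQ' := card_inter_add Qᶜ A
  rw [inter_comm Q A, inter_comm Q Aᶜ] at hsumQ
  rw [inter_comm Qᶜ A, inter_comm Qᶜ Aᶜ] at hsumQ'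
  have hdiag : #(A ∩ Q) = 0 ∧ #(Aᶜ ∩ Qᶜ) = 0 ∨ #(A ∩ Qᶜ) = 0 ∧ #(Aᶜ ∩ Q) = 0 := by omega
  simp only [card_eq_zero, ← disjoint_iff_inter_eq_empty] at hdiag
  obtain ⟨h₁, h₂⟩ | ⟨h₁, h₂⟩ := hdiag
  · exact .inr <| subset_antisymm (le_compl_iff_disjoint_left.2 h₁)
      (disjoint_compl_right_iff.1 h₂)
  · exact .inl <| subset_antisymm (disjoint_compl_left_iff.1 h₂)
      (disjoint_compl_right_iff.1 h₁)

lemma IsEdgeExpander.eq_or_eq_compl [DecidableEq V] {H₁ H₂ : SimpleGraph V} [DecidableRel H₁.Adj]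
    [DecidableRel H₂.Adj] [DecidableRel (H₁ ⊔ H₂).Adj] (hG : IsEdgeExpander G (k + 1))
    (hH₁ : ∀ v, H₁.degree v ≤ k) (hH₂ : ∀ v, H₂.degree v ≤ k)
    (hH : ∀ v, (H₁ ⊔ H₂).degree v ≤ k + 1) (hA : A.Nonempty) (hA' : A ≠ univ)
    (hAcut : cutSize (G \ H₁) A = 0) (hQ : Q.Nonempty) (hQ' : Q ≠ univ)
    (hQcut : cutSize (G \ H₂) Q = 0) : Q = A ∨ Q = Aᶜ := by
  have hAcut' := hAcut
  have hQcut' := hQcut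
  rw [← cutSize_compl] at hAcut' hQcut'
  rw [Ne, ← compl_eq_empty_iff, ← Ne, ← nonempty_iff_ne_empty] at hA' hQ'
  refine eq_or_eq_compl_of_card_inter (hG.card_lt_of_cutSize_sdiff_eq_zero hH₁ hA hAcut)
    (hG.card_lt_of_cutSize_sdiff_eq_zero hH₁ hA' hAcut')
    (hG.card_lt_of_cutSize_sdiff_eq_zero hH₂ hQ hQcut)
    (hG.card_lt_of_cutSize_sdiff_eq_zero hH₂ hQ' hQcut') fun B C hB hC hBC ↦
    hG.card_le_of_cutSize_sdiff_eq_zero k.succ_pos hH hBC (Nat.eq_zero_of_le_zero ?_)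
  have hBcut : cutSize (G \ H₁) B = 0 := by obtain rfl | rfl := hB <;> assumption
  have hCcut : cutSize (G \ H₂) C = 0 := by obtain rfl | rfl := hC <;> assumption
  calc cutSize (G \ (H₁ ⊔ H₂)) (B ∩ C)
      ≤ cutSize (G \ (H₁ ⊔ H₂)) B + cutSize (G \ (H₁ ⊔ H₂)) C := cutSize_inter_le _ B C
    _ ≤ cutSize (G \ H₁) B + cutSize (G \ H₂) C := add_le_add
      (cutSize_mono (sdiff_le_sdiff_left le_sup_left) B)
      (cutSize_mono (sdiff_le_sdiff_left le_sup_right) C)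
    _ = 0 := by rw [hBcut, hCcut]

lemma IsOneFactorable.degree_sdiff [DecidableRel G.Adj] [DecidableRel (G \ F).Adj]
    (hF : IsOneFactorable k F) (hFG : F ≤ G) (hreg : G.IsRegularOfDegree d) (v : V) :
    (G \ F).degree v = d - k := by
  classical
  have := degree_sdiff_add_degree hFG v
  rw [hF.degree_eq, hreg.degree_eq] at this
  omega

lemma IsEdgeExpander.exists_isOneFactor_or_cutSize_eq_zero [DecidableRel G.Adj]
    (hG : IsEdgeExpander G (k + 1)) (hreg : G.IsRegularOfDegree d) (heven : Even (Fintype.card V))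
    (hkd : k < d) (hFG : F ≤ G) (hF : IsOneFactorable k F) :
    (∃ M ≤ G \ F, IsOneFactor M) ∨
      ∃ Q : Finset V, Q.Nonempty ∧ Q ≠ univ ∧ cutSize (G \ F) Q = 0 := by
  classical
  have hdeg := hF.degree_sdiff hFG hreg
  exact exists_isOneFactor_or_cutSize_eq_zero_of_le_sup (E := ⊥) heven le_sup_left
    (fun v ↦ (hdeg v).le) (by simpa using hkd) fun P hP hcard ↦
    le_cutSize_of_card_le (fun v ↦ (hdeg v).ge) hP <|
      hG.card_le_cutSize_sdiff (fun v ↦ (hF.degree_eq v).le) hcard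

-- Deleting one edge `uv` of `M` across `A` leaves another one, so that `G \ (F ⊔ edge u v)` has an
-- edge across `A`, while `A` is the only cut it could miss.
lemma IsEdgeExpander.exists_isOneFactor_cutSize_pos [DecidableRel G.Adj]
    (hG : IsEdgeExpander G (j + 2)) (hreg : G.IsRegularOfDegree d) (heven : Even (Fintype.card V))
    (hjd : j + 3 ≤ d) (hF : IsOneFactorable j F) (hM : IsOneFactor M) (hFM : Disjoint F M)
    (hle : F ⊔ M ≤ G) (hA : A.Nonempty) (hA' : A ≠ univ) (hAcut : cutSize (G \ (F ⊔ M)) A = 0)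
    (hMcut : 2 ≤ cutSize M A) :
    ∃ N ≤ G \ F, IsOneFactor N ∧ 0 < cutSize (G \ (F ⊔ N)) A := by
  classical
  obtain ⟨u, hu, v, hv, huv⟩ := cutSize_pos.1 (zero_lt_two.trans_le hMcut)
  have hMG : M ≤ G \ F := le_sdiff.2 ⟨le_sup_right.trans hle, hFM.symm⟩
  have hedge : edge u v ≤ M := (edge_le_iff M).2 (.inr huv)
  have hdeg := hF.degree_sdiff (le_sup_left.trans hle) hreg
  have hFMdeg (w : V) : (F ⊔ M).degree w = j + 1 := (hF.sup hM hFM).degree_eq w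
  have hcard_edge : #(edge u v).edgeFinset = 1 := by
    simp [edgeFinset, edgeSet_edge_of_ne huv.ne]
  obtain ⟨N, hN, hN'⟩ | ⟨Q, hQ, hQ', hQcut⟩ :=
    exists_isOneFactor_or_cutSize_eq_zero_of_le_sup (X := (G \ F) \ edge u v) (Y := G \ F)
      (E := edge u v) (ρ := d - j) heven le_sdiff_sup
      (fun w ↦ (degree_le_of_le sdiff_le).trans_eq (hdeg w))
      (by omega) fun P hP hcard ↦
      le_cutSize_of_card_le (fun w ↦ (hdeg w).ge) hP <|
        (hG.mono (Nat.le_succ _)).card_le_cutSize_sdiff (fun w ↦ (hF.degree_eq w).le) hcard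
  · refine ⟨N, hN.trans sdiff_le, hN', cutSize_pos.2 ⟨u, hu, v, hv, ?_⟩⟩
    have hNuv : ¬ N.Adj u v := fun h ↦ (hN h).2 (by simp [edge_adj, huv.ne])
    exact ⟨(hMG huv).1, by simpa [hNuv] using (hMG huv).2⟩
  · rw [sdiff_sdiff_left] at hQcut
    have hsup : F ⊔ edge u v ≤ F ⊔ M := sup_le_sup_left hedge F
    have hQA : Q = A ∨ Q = Aᶜ := hG.eq_or_eq_compl (H₁ := F ⊔ M) (H₂ := F ⊔ edge u v)
      (fun w ↦ (hFMdeg w).le) (fun w ↦ (degree_le_of_le hsup).trans_eq (hFMdeg w))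
      (fun w ↦ (degree_le_of_le (sup_le le_rfl hsup)).trans ((hFMdeg w).le.trans (Nat.le_succ _)))
      hA hA' hAcut hQ hQ' hQcut
    have hzero : cutSize ((G \ F) \ edge u v) A = 0 := by
      obtain rfl | rfl := hQA
      · rwa [sdiff_sdiff_left]
      · rwa [sdiff_sdiff_left, ← cutSize_compl]
    have := cutSize_mono hMG A
    have := cutSize_le_cutSize_sdiff_add (G \ F) (edge u v) A
    have := cutSize_edge_le_one u v A
    omega

lemma IsEdgeExpander.exists_isOneFactor_of_cutSize_pos [DecidableRel G.Adj] {N : SimpleGraph V}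
    (hG : IsEdgeExpander G (j + 2)) (hreg : G.IsRegularOfDegree d) (heven : Even (Fintype.card V))
    (hjd : j + 1 < d) (hF : IsOneFactorable j F) (hM : IsOneFactor M) (hFM : Disjoint F M)
    (hle : F ⊔ M ≤ G) (hA : A.Nonempty) (hA' : A ≠ univ) (hAcut : cutSize (G \ (F ⊔ M)) A = 0)
    (hNG : N ≤ G \ F) (hN : IsOneFactor N) (hNcut : 0 < cutSize (G \ (F ⊔ N)) A) :
    ∃ L ≤ G \ (F ⊔ N), IsOneFactor L := by
  classical
  have hFM' : IsOneFactorable (j + 1) (F ⊔ M) := hF.sup hM hFM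
  have hFN : IsOneFactorable (j + 1) (F ⊔ N) := hF.sup hN (le_sdiff.1 hNG).2.symm
  have hFNG : F ⊔ N ≤ G := sup_le (le_sup_left.trans hle) (hNG.trans sdiff_le)
  refine (hG.exists_isOneFactor_or_cutSize_eq_zero hreg heven hjd hFNG hFN).resolve_right ?_
  rintro ⟨Q, hQ, hQ', hQcut⟩
  have hdeg (v : V) : (F ⊔ M ⊔ (F ⊔ N)).degree v ≤ j + 2 := calc
    _ = (F ⊔ M ⊔ N).degree v := by congr! 1; rw [← sup_sup_distrib_left, sup_assoc]
    _ ≤ (F ⊔ M).degree v + N.degree v := degree_sup_le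
    _ = j + 2 := by rw [hFM'.degree_eq, hN.degree_eq_one]
  obtain rfl | rfl := hG.eq_or_eq_compl (fun v ↦ (hFM'.degree_eq v).le)
    (fun v ↦ (hFN.degree_eq v).le) hdeg hA hA' hAcut hQ hQ' hQcut
  · omega
  · rw [cutSize_compl] at hQcut
    omega

lemma IsEdgeExpander.exists_isOneFactorable_succ [DecidableRel G.Adj] [Nontrivial V]
    (hG : IsEdgeExpander G (k + 1)) (hreg : G.IsRegularOfDegree d) (heven : Even (Fintype.card V))
    (hFG : F ≤ G) (hF : IsOneFactorable k F) : ∃ F' ≤ G, IsOneFactorable (k + 1) F' := by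
  classical
  have extend {F M : SimpleGraph V} (hF : IsOneFactorable k F) (hFG : F ≤ G) (hM : IsOneFactor M)
      (hMF : M ≤ G \ F) : ∃ F' ≤ G, IsOneFactorable (k + 1) F' :=
    ⟨F ⊔ M, sup_le hFG (hMF.trans sdiff_le), hF.sup hM (le_sdiff.1 hMF).2.symm⟩
  have hkd : k + 1 ≤ d := by simpa [hreg.degree_eq] using hG.le_degree (Classical.arbitrary V)
  obtain rfl | hkd' := hkd.eq_or_lt
  · refine extend hF hFG (fun v ↦ degree_eq_one_iff_existsUnique_adj.1 ?_) le_rfl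
    rw [hF.degree_sdiff hFG hreg]
    omega
  obtain ⟨M, hM, hM'⟩ | ⟨A, hA, hA', hAcut⟩ :=
    hG.exists_isOneFactor_or_cutSize_eq_zero hreg heven hkd hFG hF
  · exact extend hF hFG hM' hM
  have hFcut : k < cutSize F A := by
    have := hG.le_cutSize hA hA'
    have := cutSize_le_cutSize_sdiff_add G F A
    omega
  obtain ⟨j, F, M, rfl, rfl, hFM, hF, hM, hMcut⟩ := hF.exists_two_le_cutSize hFcut
  obtain ⟨N, hNG, hN, hNcut⟩ :=
    hG.exists_isOneFactor_cutSize_pos hreg heven hkd' hF hM hFM hFG hA hA' hAcut hMcut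
  obtain ⟨L, hLG, hL⟩ := hG.exists_isOneFactor_of_cutSize_pos hreg heven hkd hF hM hFM hFG hA hA'
    hAcut hNG hN hNcut
  exact extend (hF.sup hN (le_sdiff.1 hNG).2.symm)
    (sup_le (le_sup_left.trans hFG) (hNG.trans sdiff_le)) hL hLG

theorem IsEdgeExpander.exists_isOneFactorable [DecidableRel G.Adj] [Nontrivial V]
    (hG : IsEdgeExpander G k) (hreg : G.IsRegularOfDegree d) (heven : Even (Fintype.card V)) :
    ∃ F ≤ G, IsOneFactorable k F := by
  induction k with
  | zero => exact ⟨⊥, bot_le, .bot⟩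
  | succ k ih =>
    obtain ⟨F, hFG, hF⟩ := ih (hG.mono k.le_succ)
    exact hG.exists_isOneFactorable_succ hreg heven hFG hF

end Augmentation

section SpectralGap

variable {V : Type*} [Fintype V] {G : SimpleGraph V} {d : ℕ}

lemma inner_apply_self_le {ι E : Type*} [Fintype ι] [NormedAddCommGroup E] [InnerProductSpace ℝ E]
    {T : E →ₗ[ℝ] E} (hT : T.IsSymmetric) (b : OrthonormalBasis ι ℝ E) {μ : ι → ℝ}
    (hb : ∀ i, T (b i) = μ i • b i) {i₀ : ι} {m c : ℝ} (hμ : ∀ i ≠ i₀, μ i ≤ m) (hmc : m < c)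
    {w x : E} (hw : w ≠ 0) (hTw : T w = c • w) (hwx : inner ℝ w x = 0) :
    inner ℝ x (T x) ≤ m * inner ℝ x x := by
  have inner_apply (i : ι) (y : E) : inner ℝ (b i) (T y) = μ i * inner ℝ (b i) y := by
    rw [← hT, hb, real_inner_smul_left]
  have inner_w (i : ι) (hi : i ≠ i₀) : inner ℝ (b i) w = 0 := by
    have h := inner_apply i w
    rw [hTw, real_inner_smul_right] at h
    exact (mul_eq_mul_right_iff.1 h).resolve_left ((hμ i hi).trans_lt hmc).ne'
  have hw_eq : w = inner ℝ (b i₀) w • b i₀ := by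
    conv_lhs => rw [← b.sum_repr' w]
    exact Fintype.sum_eq_single i₀ fun i hi ↦ by rw [inner_w i hi, zero_smul]
  have inner_x : inner ℝ (b i₀) x = 0 := by
    rw [hw_eq, real_inner_smul_left] at hwx
    exact (mul_eq_zero.1 hwx).resolve_left fun h ↦ hw (by rw [hw_eq, h, zero_smul])
  rw [← b.sum_inner_mul_inner, ← b.sum_inner_mul_inner, mul_sum]
  refine sum_le_sum fun i _ ↦ ?_
  rw [inner_apply, real_inner_comm (b i) x]
  obtain rfl | hi := eq_or_ne i i₀
  · simp [inner_x]
  · nlinarith [hμ i hi, mul_self_nonneg (inner ℝ (b i) x)]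

open Classical in
lemma adjEigenvalues_eq (G : SimpleGraph V) :
    adjEigenvalues G = List.ofFn ((adjMatrix_isHermitian G).eigenvalues₀ ∘ Fin.rev) := by
  rw [← Fin.univ_val_map, ← Multiset.map_map]
  exact (Multiset.map_map _ _ _).symm.trans <| congrArg (Multiset.map _) <|
    (Multiset.map_univ_val_equiv _).trans (Multiset.map_univ_val_equiv Fin.revPerm).symm

open Classical in
lemma lambda2_eq_eigenvalues₀ (hV : 1 < Fintype.card V) :
    lambda2 G = (adjMatrix_isHermitian G).eigenvalues₀ ⟨1, hV⟩ := by
  have hmono : Monotone ((adjMatrix_isHermitian G).eigenvalues₀ ∘ Fin.rev) :=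
    (adjMatrix_isHermitian G).eigenvalues₀_antitone.comp Fin.rev_anti
  have hsort : (adjEigenvalues G).sort (· ≤ ·) =
      List.ofFn ((adjMatrix_isHermitian G).eigenvalues₀ ∘ Fin.rev) :=
    List.Perm.eq_of_pairwise' (Multiset.pairwise_sort _ _) hmono.sortedLE_ofFn.pairwise <|
      Multiset.coe_eq_coe.1 <| (Multiset.sort_eq _ _).trans (adjEigenvalues_eq G)
  rw [lambda2, hsort, List.getD_eq_getElem _ _ (by rw [List.length_ofFn]; omega), List.getElem_ofFn]
  refine congrArg (adjMatrix_isHermitian G).eigenvalues₀ (Fin.ext ?_)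
  change Fintype.card V - (Fintype.card V - 2 + 1) = 1
  omega

open Classical in
lemma exists_forall_ne_eigenvalues_le_lambda2 [Nontrivial V] (G : SimpleGraph V) :
    ∃ i₀, ∀ i ≠ i₀, (adjMatrix_isHermitian G).eigenvalues i ≤ lambda2 G := by
  have hV : 1 < Fintype.card V := Fintype.one_lt_card
  let e : V ≃ Fin (Fintype.card V) := (Fintype.equivOfCardEq (Fintype.card_fin _)).symm
  refine ⟨e.symm ⟨0, by omega⟩, fun i hi ↦ ?_⟩
  have he : (e i).val ≠ 0 := fun h ↦ hi <| e.eq_symm_apply.2 (Fin.ext h)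
  rw [lambda2_eq_eigenvalues₀ hV]
  exact (adjMatrix_isHermitian G).eigenvalues₀_antitone (Nat.one_le_iff_ne_zero.2 he)

open Classical in
lemma dotProduct_adjMatrix_mulVec_le [Nontrivial V] (hreg : G.IsRegularOfDegree d)
    (hd : lambda2 G < d) {x : V → ℝ} (hx : ∑ v, x v = 0) :
    x ⬝ᵥ (G.adjMatrix ℝ).mulVec x ≤ lambda2 G * x ⬝ᵥ x := by
  have hA := adjMatrix_isHermitian G
  obtain ⟨i₀, hi₀⟩ := exists_forall_ne_eigenvalues_le_lambda2 G
  have := inner_apply_self_le (Matrix.isSymmetric_toEuclideanLin_iff.2 hA) hA.eigenvectorBasis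
    (μ := hA.eigenvalues) (fun i ↦ ?_) hi₀ hd (w := WithLp.toLp 2 1) (x := WithLp.toLp 2 x) ?_ ?_ ?_
  · simp only [EuclideanSpace.inner_eq_star_dotProduct] at this
    simpa [dotProduct_comm] using this
  · ext j
    simpa [Matrix.toLpLin_apply] using congrFun (hA.mulVec_eigenvectorBasis i) j
  · simp
  · ext v
    simp [Matrix.toLpLin_apply, hreg.degree_eq]
  · simp [EuclideanSpace.inner_eq_star_dotProduct, dotProduct, hx]

lemma sub_lambda2_mul_dotProduct_self_le [Nontrivial V] [DecidableEq V] [DecidableRel G.Adj]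
    (hreg : G.IsRegularOfDegree d) {x : V → ℝ} (hx : ∑ v, x v = 0) :
    (d - lambda2 G) * x ⬝ᵥ x ≤ x ⬝ᵥ (G.lapMatrix ℝ).mulVec x := by
  obtain hd | hd := le_or_gt (d : ℝ) (lambda2 G)
  · calc (d - lambda2 G) * x ⬝ᵥ x ≤ 0 := mul_nonpos_of_nonpos_of_nonneg (sub_nonpos.2 hd)
          (by simpa using dotProduct_star_self_nonneg x)
      _ ≤ x ⬝ᵥ (G.lapMatrix ℝ).mulVec x := by
        simpa using (posSemidef_lapMatrix ℝ G).dotProduct_mulVec_nonneg x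
  have hlap : x ⬝ᵥ (G.lapMatrix ℝ).mulVec x = d * x ⬝ᵥ x - x ⬝ᵥ (G.adjMatrix ℝ).mulVec x := by
    rw [lapMatrix, Matrix.sub_mulVec, dotProduct_sub, dotProduct_mulVec_degMatrix]
    simp [dotProduct, hreg.degree_eq, mul_sum, mul_assoc]
  have := dotProduct_adjMatrix_mulVec_le (by convert hreg) hd hx
  rw [hlap, sub_mul]
  convert sub_le_sub_left this _

lemma dotProduct_lapMatrix_mulVec_ite [DecidableEq V] [DecidableRel G.Adj] (P : Finset V)
    (a b : ℝ) :
    (fun v ↦ if v ∈ P then a else b) ⬝ᵥ (G.lapMatrix ℝ).mulVec (fun v ↦ if v ∈ P then a else b) =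
      (a - b) ^ 2 * cutSize G P := by
  have cutSize_eq (Q : Finset V) :
      (cutSize G Q : ℝ) = ∑ u, ∑ v, if u ∈ Q ∧ v ∉ Q ∧ G.Adj u v then 1 else 0 := by
    rw [cutSize, ← sum_product', sum_boole]
    congr 2
    ext
    simp [mem_interedges_iff]
  have htwo : (2 * cutSize G P : ℝ) = cutSize G P + cutSize G Pᶜ := by rw [cutSize_compl]; ring
  rw [← Matrix.toLinearMap₂'_apply', lapMatrix_toLinearMap₂', div_eq_iff two_ne_zero, mul_assoc,
    mul_comm _ (2 : ℝ), htwo, cutSize_eq, cutSize_eq]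
  simp only [← sum_add_distrib, mul_sum]
  refine sum_congr rfl fun u _ ↦ sum_congr rfl fun v _ ↦ ?_
  by_cases huv : G.Adj u v <;> by_cases hu : u ∈ P <;> by_cases hv : v ∈ P <;>
    simp [huv, hu, hv, sub_sq_comm]

lemma sub_lambda2_mul_card_mul_card_le [Nontrivial V] [DecidableRel G.Adj]
    (hreg : G.IsRegularOfDegree d) (P : Finset V) :
    (d - lambda2 G) * (#P * (Fintype.card V - #P)) ≤ Fintype.card V * cutSize G P := by
  classical
  set n : ℝ := (Fintype.card V : ℝ)
  have hn : 0 < n := by simp [n, Fintype.card_pos]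
  have sum_ite_mem (a b : ℝ) : ∑ v, (if v ∈ P then a else b) = #P * a + (n - #P) * b := by
    have hcompl : (#Pᶜ : ℝ) = n - #P := by rw [card_compl, Nat.cast_sub (card_le_univ P)]
    simp [sum_ite, ← compl_filter, hcompl]
  let x : V → ℝ := fun v ↦ if v ∈ P then n - #P else -#P
  have hx : ∑ v, x v = 0 := by
    rw [sum_ite_mem]
    ring
  have hxx : x ⬝ᵥ x = n * (#P * (n - #P)) := by
    simp only [dotProduct, x, ite_mul_ite, sum_ite_mem]
    ring
  refine le_of_mul_le_mul_left ?_ hn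
  calc n * ((d - lambda2 G) * (#P * (n - #P))) = (d - lambda2 G) * x ⬝ᵥ x := by rw [hxx]; ring
    _ ≤ x ⬝ᵥ (G.lapMatrix ℝ).mulVec x := sub_lambda2_mul_dotProduct_self_le hreg hx
    _ = n * (n * cutSize G P) := by
      rw [dotProduct_lapMatrix_mulVec_ite]
      ring

lemma isEdgeExpander_floor [Nontrivial V] [DecidableRel G.Adj] (hreg : G.IsRegularOfDegree d) :
    IsEdgeExpander G ⌊(2 / 3 : ℝ) * (d - lambda2 G)⌋₊ := by
  intro P
  obtain hle | hlt := le_total ((2 / 3 : ℝ) * (d - lambda2 G)) 0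
  · simp [Nat.floor_of_nonpos hle]
  have hfloor := Nat.floor_le hlt
  have hcut := sub_lambda2_mul_card_mul_card_le hreg P
  have hP : #P ≤ Fintype.card V := card_le_univ P
  have hnonneg : (0 : ℝ) ≤ #P * (Fintype.card V - #P) := by
    rw [← Nat.cast_sub hP]
    positivity
  rw [← Nat.cast_le (α := ℝ)]
  push_cast [hP]
  nlinarith

end SpectralGap

theorem edge_disjoint_perfect_matchings_general {V : Type*} [Fintype V] [Nonempty V]
    (G : SimpleGraph V) [DecidableRel G.Adj] (d : ℕ) (hreg : G.IsRegularOfDegree d)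
    (heven : Even (Fintype.card V)) :
    ∃ M : Fin ⌊(2 / 3 : ℝ) * ((d : ℝ) - lambda2 G)⌋₊ → G.Subgraph,
      (∀ i, (M i).IsPerfectMatching) ∧
        ∀ i j, i ≠ j → Disjoint (M i).edgeSet (M j).edgeSet := by
  have : Nontrivial V := Fintype.one_lt_card_iff_nontrivial.1 <| by
    have := Fintype.card_pos (α := V)
    grind
  obtain ⟨F, hFG, hF⟩ := (isEdgeExpander_floor hreg).exists_isOneFactorable hreg heven
  exact hF.exists_isPerfectMatching hFG

/-- **Theorem (edge-disjoint perfect matchings).**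
Let `G` be a connected `d`-regular graph of even order, where `d ≥ 3`. Then `G` contains
`⌊(2/3)·(d - λ₂(G))⌋` pairwise edge-disjoint perfect matchings. -/
theorem edge_disjoint_perfect_matchings {V : Type*} [Fintype V] (G : SimpleGraph V)
    [DecidableRel G.Adj] (d : ℕ) (hd : 3 ≤ d) (hconn : G.Connected)
    (hreg : G.IsRegularOfDegree d) (heven : Even (Fintype.card V)) :
    ∃ M : Fin ⌊(2 / 3 : ℝ) * ((d : ℝ) - lambda2 G)⌋₊ → G.Subgraph,
      (∀ i, (M i).IsPerfectMatching) ∧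
        ∀ i j, i ≠ j → Disjoint (M i).edgeSet (M j).edgeSet :=
  have := hconn.nonempty
  edge_disjoint_perfect_matchings_general G d hreg heven
end

section
/- Let G be a connected d-regular graph with d ≥ 3, and let λ₂(G) be the second largest eigenvalue of its adjacency matrix. If λ₂(G) ≤ d − 3, then G is d-edge-connected. -/
/-!
Let `e` be the number of edges between `S` and `Sᶜ` in a graph of minimum degree at least `d`.
By min-max, some nonzero vector equal to a constant `a` on `S` and to a constant `b` on `Sᶜ` has
Rayleigh quotient at most `λ₂`. Its quadratic form is at least
`d (|S| a² + |Sᶜ| b²) - e (a - b)²`, and Cauchy-Schwarz turns this into the isoperimetric inequality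
`(d - λ₂) |S| |Sᶜ| ≤ e (|S| + |Sᶜ|)`. If `e < d`, then both sides of the cut have more than `d`
vertices, because a vertex of `S` has at most `|S| - 1` neighbours in `S`. Hence
`d - λ₂ ≤ 2 e / (d + 1) < 2`.
-/

section Rayleigh

open scoped InnerProductSpace

variable {𝕜 E M ι : Type*} [RCLike 𝕜] [NormedAddCommGroup E] [InnerProductSpace 𝕜 E]
  [AddCommGroup M] [Module 𝕜 M] [Fintype ι]

lemma re_inner_map_self_eq_sum_of_eigenbasis (b : OrthonormalBasis ι 𝕜 E) {T : E →ₗ[𝕜] E}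
    {μ : ι → ℝ} (hT : ∀ i, T (b i) = (μ i : 𝕜) • b i) (x : E) :
    RCLike.re ⟪x, T x⟫_𝕜 = ∑ i, μ i * ‖⟪b i, x⟫_𝕜‖ ^ 2 := by
  have hTx : T x = ∑ i, (⟪b i, x⟫_𝕜 * μ i) • b i := by
    conv_lhs => rw [← b.sum_repr' x]
    simp only [map_sum, map_smul, hT, smul_smul]
  rw [hTx, inner_sum, map_sum]
  refine Finset.sum_congr rfl fun i _ ↦ ?_
  rw [inner_smul_right, ← inner_conj_symm x, mul_right_comm, RCLike.mul_conj, mul_comm,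
    ← RCLike.ofReal_pow, ← RCLike.ofReal_mul, RCLike.ofReal_re]

lemma exists_ne_zero_re_inner_map_self_le (b : OrthonormalBasis ι 𝕜 E) {T : E →ₗ[𝕜] E}
    {μ : ι → ℝ} (hT : ∀ i, T (b i) = (μ i : 𝕜) • b i) (c : ℝ) (f : M →ₗ[𝕜] E)
    (hc : Fintype.card {i // c < μ i} < Module.finrank 𝕜 M) :
    ∃ y ≠ 0, RCLike.re ⟪f y, T (f y)⟫_𝕜 ≤ c * ‖f y‖ ^ 2 := by
  have : FiniteDimensional 𝕜 M := Module.finite_of_finrank_pos (by omega)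
  -- The functionals `y ↦ ⟪b i, f y⟫` with `c < μ i` are too few to have trivial common kernel.
  let g : M →ₗ[𝕜] ({i // c < μ i} → 𝕜) :=
    LinearMap.pi fun i ↦ (innerSL 𝕜 (b i)).toLinearMap ∘ₗ f
  obtain ⟨y, hy, hy0⟩ := (LinearMap.ker g).ne_bot_iff.1
    (LinearMap.ker_ne_bot_of_finrank_lt (by rwa [Module.finrank_pi]))
  have horth (i : ι) (hi : c < μ i) : ⟪b i, f y⟫_𝕜 = 0 := congr_fun hy ⟨i, hi⟩
  refine ⟨y, hy0, ?_⟩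
  rw [re_inner_map_self_eq_sum_of_eigenbasis b hT, ← b.sum_sq_norm_inner_right, Finset.mul_sum]
  refine Finset.sum_le_sum fun i _ ↦ ?_
  rcases le_or_gt (μ i) c with hi | hi
  · gcongr
  · simp [horth i hi]

open Matrix in
lemma exists_ne_zero_re_star_dotProduct_mulVec_le [DecidableEq ι] {A : Matrix ι ι 𝕜}
    (hA : A.IsHermitian) (c : ℝ) (f : M →ₗ[𝕜] (ι → 𝕜))
    (hc : Fintype.card {i // c < hA.eigenvalues i} < Module.finrank 𝕜 M) :
    ∃ y ≠ 0, RCLike.re (star (f y) ⬝ᵥ A *ᵥ f y) ≤ c * RCLike.re (star (f y) ⬝ᵥ f y) := by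
  have hT (i : ι) : Matrix.toEuclideanLin A (hA.eigenvectorBasis i) =
      (hA.eigenvalues i : 𝕜) • hA.eigenvectorBasis i := by
    rw [Matrix.toLpLin_apply, hA.mulVec_eigenvectorBasis, RCLike.real_smul_eq_coe_smul (K := 𝕜)]
    rfl
  obtain ⟨y, hy0, hy⟩ := exists_ne_zero_re_inner_map_self_le hA.eigenvectorBasis hT c
    ((WithLp.linearEquiv 2 𝕜 (ι → 𝕜)).symm.toLinearMap ∘ₗ f) hc
  refine ⟨y, hy0, ?_⟩
  rw [← inner_self_eq_norm_sq (𝕜 := 𝕜), EuclideanSpace.inner_eq_star_dotProduct,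
    EuclideanSpace.inner_eq_star_dotProduct] at hy
  simpa [dotProduct_comm] using hy

end Rayleigh

lemma countP_lt_le_of_sortedLE {α : Type*} [LinearOrder α] {l : List α} (hl : l.SortedLE) {k : ℕ}
    (hk : k < l.length) {c : α} (hc : l[k] ≤ c) : l.countP (c < ·) ≤ l.length - (k + 1) := by
  have hle : ∀ a ∈ l.take (k + 1), ¬ c < a := by
    intro a ha
    obtain ⟨i, hi, rfl⟩ := List.mem_take_iff_getElem.1 ha
    exact not_lt.2 ((hl.getElem_le_getElem_of_le (by omega)).trans hc)
  calc l.countP (c < ·) = (l.drop (k + 1)).countP (c < ·) := by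
        conv_lhs => rw [← l.take_append_drop (k + 1)]
        rw [List.countP_append, List.countP_eq_zero.2 (by simpa using hle), zero_add]
    _ ≤ (l.drop (k + 1)).length := List.countP_le_length
    _ = l.length - (k + 1) := List.length_drop

lemma card_lambda2_lt_eigenvalues_le_one {V : Type*} [Fintype V] [DecidableEq V]
    (G : SimpleGraph V) [DecidableRel G.Adj] :
    Fintype.card {v // lambda2 G < (adjMatrix_isHermitian G).eigenvalues v} ≤ 1 := by
  cases isEmpty_or_nonempty V
  · simp
  have hlen : (adjEigenvalues G).sort.length = Fintype.card V := by simp [adjEigenvalues]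
  have hpos : 0 < Fintype.card V := Fintype.card_pos
  have hk : Fintype.card V - 2 < (adjEigenvalues G).sort.length := by omega
  have hsorted : (adjEigenvalues G).sort.SortedLE := ((adjEigenvalues G).pairwise_sort _).sortedLE
  calc Fintype.card {v // lambda2 G < (adjMatrix_isHermitian G).eigenvalues v}
      = (adjEigenvalues G).countP (lambda2 G < ·) := by
        rw [adjEigenvalues, Multiset.countP_map, Fintype.card_subtype, Finset.card_def,
          Finset.filter_val]
        congr!
    _ = (adjEigenvalues G).sort.countP (lambda2 G < ·) := by
        rw [← Multiset.coe_countP, Multiset.sort_eq]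
    _ ≤ Fintype.card V - (Fintype.card V - 2 + 1) :=
        hlen ▸ countP_lt_le_of_sortedLE hsorted hk (List.getD_eq_getElem _ 0 hk).ge
    _ ≤ 1 := by omega

section Cut

open Finset

variable {V : Type*} (G : SimpleGraph V) [DecidableRel G.Adj]

lemma card_interedges_eq_sum (s t : Finset V) :
    #(G.interedges s t) = ∑ v ∈ s, #{w ∈ t | G.Adj v w} := by
  simp only [G.interedges_def, card_filter, sum_product]

lemma card_interedges_comm (s t : Finset V) : #(G.interedges s t) = #(G.interedges t s) :=
  have := G.symm
  Rel.card_interedges_comm s t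

lemma card_interedges_le_card {s t : Finset V} (hst : Disjoint s t)
    {E : Finset (Sym2 V)} (hE : ∀ v ∈ s, ∀ w ∈ t, G.Adj v w → s(v, w) ∈ E) :
    #(G.interedges s t) ≤ #E := by
  refine card_le_card_of_injOn (fun p ↦ s(p.1, p.2)) ?_ ?_
  · rintro ⟨v, w⟩ hvw
    obtain ⟨hv, hw, hadj⟩ := G.mk_mem_interedges_iff.1 hvw
    exact hE v hv w hw hadj
  · rintro ⟨v, w⟩ hvw ⟨v', w'⟩ hvw' heq
    have hv := (G.mk_mem_interedges_iff.1 hvw).1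
    have hw' := (G.mk_mem_interedges_iff.1 hvw').2.1
    rcases Sym2.eq_iff.1 heq with ⟨rfl, rfl⟩ | ⟨rfl, rfl⟩
    · rfl
    · exact absurd hw' (Finset.disjoint_left.1 hst hv)

variable [Fintype V]

open Matrix in
lemma dotProduct_adjMatrix_mulVec_self {R : Type*} [Field R] [CharZero R] (x : V → R) :
    x ⬝ᵥ G.adjMatrix R *ᵥ x = ∑ v, G.degree v * x v ^ 2 -
      (∑ v, ∑ w, if G.Adj v w then (x v - x w) ^ 2 else 0) / 2 := by
  classical
  rw [← G.lapMatrix_toLinearMap₂' R, toLinearMap₂'_apply', SimpleGraph.lapMatrix, sub_mulVec,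
    dotProduct_sub, G.dotProduct_mulVec_degMatrix]
  simp only [sq, mul_assoc, sub_sub_cancel]

variable [DecidableEq V]

lemma exists_cut_of_not_preconnected_deleteEdges {E : Finset (Sym2 V)}
    (hE : ¬ (G.deleteEdges (E : Set (Sym2 V))).Preconnected) :
    ∃ S : Finset V, S.Nonempty ∧ Sᶜ.Nonempty ∧ #(G.interedges S Sᶜ) ≤ #E := by
  classical
  unfold SimpleGraph.Preconnected at hE
  push Not at hE
  obtain ⟨a, b, hab⟩ := hE
  refine ⟨univ.filter ((G.deleteEdges (E : Set (Sym2 V))).Reachable a), ⟨a, by simp⟩,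
    ⟨b, by simpa using hab⟩, card_interedges_le_card G disjoint_compl_right ?_⟩
  intro v hv w hw hadj
  by_contra hvw
  have hadj' : (G.deleteEdges (E : Set (Sym2 V))).Adj v w :=
    SimpleGraph.deleteEdges_adj.2 ⟨hadj, mod_cast hvw⟩
  simp only [mem_compl, mem_filter_univ] at hv hw
  exact hw (hv.trans hadj'.reachable)

lemma sum_degree_le_card_interedges_compl (S : Finset V) :
    ∑ v ∈ S, G.degree v ≤ #(G.interedges S Sᶜ) + #S * (#S - 1) := by
  rw [card_interedges_eq_sum, ← smul_eq_mul, ← sum_const, ← sum_add_distrib]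
  refine sum_le_sum fun v hv ↦ ?_
  rw [← card_erase_of_mem hv, ← G.card_neighborFinset_eq_degree]
  refine (card_le_card fun w hw ↦ ?_).trans (card_union_le _ _)
  have hadj : G.Adj v w := by simpa using hw
  by_cases hwS : w ∈ S <;> simp [hwS, hadj, hadj.ne']

lemma lt_card_of_card_interedges_compl_lt {d : ℕ} {S : Finset V} (hS : S.Nonempty)
    (hdeg : ∀ v ∈ S, d ≤ G.degree v) (hcut : #(G.interedges S Sᶜ) < d) : d < #S := by
  by_contra! hSd
  have hsum : #S * d ≤ #(G.interedges S Sᶜ) + #S * (#S - 1) :=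
    (card_nsmul_le_sum S _ d hdeg).trans (sum_degree_le_card_interedges_compl G S)
  have hS1 : 1 ≤ #S := hS.card_pos
  zify [hS1] at hsum hcut
  have hconcave : 0 ≤ (#S - 1 : ℤ) * (d - #S) := mul_nonneg (by omega) (by omega)
  linarith

lemma sum_adj_sub_sq_ite_mem {R : Type*} [CommRing R] (S : Finset V) (a b : R) :
    (∑ v, ∑ w, if G.Adj v w then
      ((if v ∈ S then a else b) - (if w ∈ S then a else b)) ^ 2 else 0) =
      2 * #(G.interedges S Sᶜ) * (a - b) ^ 2 := by
  have hcard (s t : Finset V) : (#(G.interedges s t) : R) * (a - b) ^ 2 =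
      ∑ v ∈ s, ∑ w ∈ t, if G.Adj v w then (a - b) ^ 2 else 0 := by
    simp only [card_interedges_eq_sum, Nat.cast_sum, natCast_card_filter, sum_mul, ite_mul,
      one_mul, zero_mul]
  rw [two_mul, add_mul]
  nth_rw 2 [card_interedges_comm]
  rw [hcard, hcard, ← sum_add_sum_compl S]
  congr 1
  · refine sum_congr rfl fun v hv ↦ ?_
    rw [← sum_add_sum_compl S, sum_eq_zero fun w hw ↦ by simp [hv, hw], zero_add]
    exact sum_congr rfl fun w hw ↦ by simp [hv, mem_compl.1 hw]
  · refine sum_congr rfl fun v hv ↦ ?_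
    rw [← sum_add_sum_compl S, sum_eq_zero (s := Sᶜ) fun w hw ↦ by
      simp [mem_compl.1 hv, mem_compl.1 hw], add_zero]
    exact sum_congr rfl fun w hw ↦ by simp [mem_compl.1 hv, hw, sub_sq_comm b a]

lemma sum_ite_mem_sq {R : Type*} [CommSemiring R] (S : Finset V) (a b : R) :
    ∑ v, (if v ∈ S then a else b) ^ 2 = #S * a ^ 2 + #Sᶜ * b ^ 2 := by
  simp only [ite_pow, sum_ite, sum_const, nsmul_eq_mul, filter_univ_mem, filter_notMem_eq_sdiff,
    compl_eq_univ_sdiff]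

open Matrix in
lemma le_dotProduct_adjMatrix_mulVec_ite_mem {d : ℕ} (hdeg : ∀ v, d ≤ G.degree v) (S : Finset V)
    (a b : ℝ) :
    d * (#S * a ^ 2 + #Sᶜ * b ^ 2) - #(G.interedges S Sᶜ) * (a - b) ^ 2 ≤
      (fun v ↦ if v ∈ S then a else b) ⬝ᵥ G.adjMatrix ℝ *ᵥ fun v ↦ if v ∈ S then a else b := by
  rw [dotProduct_adjMatrix_mulVec_self, sum_adj_sub_sq_ite_mem, mul_assoc 2,
    mul_div_cancel_left₀ _ two_ne_zero, ← sum_ite_mem_sq, mul_sum]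
  gcongr with v
  exact hdeg v

lemma exists_sub_lambda2_mul_le {d : ℕ} (hdeg : ∀ v, d ≤ G.degree v) (S : Finset V) :
    ∃ a b : ℝ, (a ≠ 0 ∨ b ≠ 0) ∧
      (d - lambda2 G) * (#S * a ^ 2 + #Sᶜ * b ^ 2) ≤ #(G.interedges S Sᶜ) * (a - b) ^ 2 := by
  obtain ⟨y, hy0, hy⟩ := exists_ne_zero_re_star_dotProduct_mulVec_le (adjMatrix_isHermitian G)
    (lambda2 G) (LinearMap.funLeft ℝ ℝ fun v ↦ decide (v ∈ S))
    ((card_lambda2_lt_eigenvalues_le_one G).trans_lt (by simp))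
  have hfy : LinearMap.funLeft ℝ ℝ (fun v ↦ decide (v ∈ S)) y =
      fun v ↦ if v ∈ S then y true else y false := by
    ext v
    by_cases hv : v ∈ S <;> simp [LinearMap.funLeft_apply, hv]
  refine ⟨y true, y false, ?_, ?_⟩
  · contrapose! hy0
    ext (_ | _) <;> simp [hy0]
  · have hupper := (le_dotProduct_adjMatrix_mulVec_ite_mem G hdeg S (y true) (y false)).trans
      (by simpa only [hfy, star_trivial, RCLike.re_to_real] using hy)
    simp only [dotProduct, ← sq, sum_ite_mem_sq] at hupper
    linarith

lemma sub_lambda2_mul_card_mul_card_compl_le {d : ℕ} (hdeg : ∀ v, d ≤ G.degree v)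
    (S : Finset V) :
    (d - lambda2 G) * (#S * #Sᶜ) ≤ #(G.interedges S Sᶜ) * (#S + #Sᶜ) := by
  rcases (#S * #Sᶜ).eq_zero_or_pos with h0 | hpos
  · have h0' : (#S : ℝ) * #Sᶜ = 0 := mod_cast h0
    rw [h0', mul_zero]
    positivity
  obtain ⟨a, b, hab, hle⟩ := exists_sub_lambda2_mul_le G hdeg S
  have hS : (0 : ℝ) < #S := mod_cast Nat.pos_of_mul_pos_right hpos
  have hSc : (0 : ℝ) < #Sᶜ := mod_cast Nat.pos_of_mul_pos_left hpos
  have hnorm : (0 : ℝ) < #S * a ^ 2 + #Sᶜ * b ^ 2 := by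
    rcases hab with ha | hb <;> positivity
  have hcauchy : (a - b) ^ 2 * (#S * #Sᶜ : ℝ) ≤ (#S + #Sᶜ) * (#S * a ^ 2 + #Sᶜ * b ^ 2) := by
    linarith [sq_nonneg (#S * a + #Sᶜ * b : ℝ)]
  refine le_of_mul_le_mul_right ?_ hnorm
  calc (d - lambda2 G) * (#S * #Sᶜ) * (#S * a ^ 2 + #Sᶜ * b ^ 2)
      = (d - lambda2 G) * (#S * a ^ 2 + #Sᶜ * b ^ 2) * (#S * #Sᶜ) := by ring
    _ ≤ #(G.interedges S Sᶜ) * (a - b) ^ 2 * (#S * #Sᶜ) := by gcongr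
    _ = #(G.interedges S Sᶜ) * ((a - b) ^ 2 * (#S * #Sᶜ)) := by ring
    _ ≤ #(G.interedges S Sᶜ) * ((#S + #Sᶜ) * (#S * a ^ 2 + #Sᶜ * b ^ 2)) := by gcongr
    _ = #(G.interedges S Sᶜ) * (#S + #Sᶜ) * (#S * a ^ 2 + #Sᶜ * b ^ 2) := by ring

end Cut

open Finset in
theorem d_edge_connected_of_lambda2_general {V : Type*} [Fintype V] [Nonempty V]
    (G : SimpleGraph V) [DecidableRel G.Adj] {d : ℕ} (hdeg : ∀ v, d ≤ G.degree v)
    (E : Finset (Sym2 V)) (hE : #E < d) (hl : lambda2 G < d - 2 * #E / (d + 1)) :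
    (G.deleteEdges (E : Set (Sym2 V))).Connected := by
  classical
  refine ⟨?_⟩
  by_contra hdisc
  obtain ⟨S, hS, hSc, hcut⟩ := exists_cut_of_not_preconnected_deleteEdges G hdisc
  have hcut' : #(G.interedges Sᶜ Sᶜᶜ) ≤ #E := by rwa [compl_compl, card_interedges_comm]
  have hcard : (d + 1 : ℝ) ≤ #S := by
    exact_mod_cast lt_card_of_card_interedges_compl_lt G hS (fun v _ ↦ hdeg v) (hcut.trans_lt hE)
  have hcard' : (d + 1 : ℝ) ≤ #Sᶜ := by
    exact_mod_cast lt_card_of_card_interedges_compl_lt G hSc (fun v _ ↦ hdeg v) (hcut'.trans_lt hE)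
  have hpos : 0 < (#S : ℝ) * #Sᶜ := by positivity
  have hgap : d - lambda2 G ≤ 2 * #E / (d + 1) := calc
    d - lambda2 G ≤ #E * (#S + #Sᶜ) / (#S * #Sᶜ) := by
      rw [le_div_iff₀ hpos]
      exact (sub_lambda2_mul_card_mul_card_compl_le G hdeg S).trans (by gcongr)
    _ = #E * ((#Sᶜ : ℝ)⁻¹ + (#S : ℝ)⁻¹) := by field_simp
    _ ≤ #E * ((d + 1 : ℝ)⁻¹ + (d + 1 : ℝ)⁻¹) := by gcongr
    _ = 2 * #E / (d + 1) := by ring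
  linarith

/-- **Claim (d-edge-connectivity).**
Let `G` be a connected `d`-regular graph with `d ≥ 3`. If `λ₂(G) ≤ d - 3`, then `G` is
`d`-edge-connected: deleting any set of fewer than `d` edges leaves `G` connected. -/
theorem d_edge_connected_of_lambda2 {V : Type*} [Fintype V] (G : SimpleGraph V)
    [DecidableRel G.Adj] (d : ℕ) (hd : 3 ≤ d) (hconn : G.Connected)
    (hreg : G.IsRegularOfDegree d) (hl : lambda2 G ≤ (d : ℝ) - 3) :
    ∀ E : Finset (Sym2 V), ↑E ⊆ G.edgeSet → E.card < d → (G.deleteEdges ↑E).Connected := by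
  intro E _ hE
  have hEd : (E.card : ℝ) < d := by exact_mod_cast hE
  have : Nonempty V := hconn.nonempty
  refine d_edge_connected_of_lambda2_general G (fun v ↦ (hreg v).ge) E hE (hl.trans_lt ?_)
  gcongr
  rw [div_lt_iff₀ (by positivity)]
  linarith
end
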